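/- arXiv:2402.03938 — 2 statements merged into one kernel-verified Lean document; each statement's English description precedes it below -/
import Mathlib

section
/- Let s = 1 and let M be a nonzero q^t-orbits vector indexed by Z_r. Then mad(M) = d*(M); equivalently, if P and M are q^t-orbits vectors with P < M and d*(P) < d*(M), then P = 0. -/
/-!
Shrinking the support of a hypermatrix can only lengthen its runs of zero hypercolumns: if
`0 ≠ P ≤ M`, walk backwards from an index `b` to the first index `c` whose hypercolumn of `P` is
nonzero. The hypercolumns of `P` strictly after `c` up to `b` vanish, and then so do those of the
zero run of `M` following `b`, so `ω_P(k,c) ≥ ω_M(k,b)`. In dimension one a hypercolumn is a scalar,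
so the apparent distance depends only on these run lengths and is antitone on nonzero vectors;
hence the minimum defining `mad(M)` is attained at `M` itself.
-/

open Classical

noncomputable section

namespace AbelianCodes

/-- The index set `I = Z_{r 0} × ⋯ × Z_{r (s-1)}`. -/
abbrev Idx {s : ℕ} (r : Fin s → ℕ) : Type := ∀ k, ZMod (r k)

variable {F : Type*} [Field F]

/-- The support of a hypermatrix. -/
def hsupp {s : ℕ} {r : Fin s → ℕ} (M : Idx r → F) : Set (Idx r) := {i | M i ≠ 0}

/-- The hypercolumn `H_M(k,b)` of a hypermatrix, viewed as an `(s-1)`-dimensional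
hypermatrix indexed by `∏_{j ≠ k} Z_{r j}`. -/
def hypercol {s : ℕ} {r : Fin (s+1) → ℕ} (M : Idx r → F) (k : Fin (s+1)) (b : ZMod (r k)) :
    Idx (fun j => r (k.succAbove j)) → F :=
  fun i => M (k.insertNth b i)

/-- `ω_M(k,b)`: the number of consecutive zero hypercolumns
`H_M(k,b+1), H_M(k,b+2), …` (indices modulo `r k`). -/
def runLen {s : ℕ} {r : Fin (s+1) → ℕ} (M : Idx r → F) (k : Fin (s+1)) (b : ZMod (r k)) : ℕ :=
  ((Finset.Ico 1 (r k)).filter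
    (fun j => ∀ m : ℕ, m ∈ Finset.Icc 1 j → hypercol M k (b + (m : ZMod (r k))) = 0)).card

/-- The apparent distance `d*(M)` of a hypermatrix, defined recursively on the
number of variables.  (A `0`-dimensional hypermatrix is a scalar, of apparent
distance `1` if nonzero and `0` otherwise; with this convention the `1`-dimensional
case becomes `max {ω_M(b)+1 : a_b ≠ 0}` and the higher-dimensional case becomes
`max_k max {(ω_M(k,b)+1)·d*(H_M(k,b)) : H_M(k,b) ≠ 0}`, since zero hypermatrices
have apparent distance `0`.) -/
def apd : {s : ℕ} → (r : Fin s → ℕ) → (Idx r → F) → ℕ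
  | 0, _, M => if M finZeroElim = 0 then 0 else 1
  | _+1, r, M =>
      Finset.univ.sup fun k =>
        Finset.univ.sup fun b : Fin (r k) =>
          (runLen M k ((b : ℕ) : ZMod (r k)) + 1) *
            apd (fun j => r (k.succAbove j)) (hypercol M k ((b : ℕ) : ZMod (r k)))

/-- The `q^t`-orbit `Q_t(a)` of `a ∈ I`. -/
def qOrbit {s : ℕ} (r : Fin s → ℕ) (q t : ℕ) (a : Idx r) : Set (Idx r) :=
  {i | ∃ n : ℕ, ∀ k, i k = (q : ZMod (r k)) ^ (t * n) * a k}

/-- `D` is a union of `q^t`-orbits. -/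
def OrbitUnion {s : ℕ} (r : Fin s → ℕ) (q t : ℕ) (D : Set (Idx r)) : Prop :=
  ∀ a ∈ D, qOrbit r q t a ⊆ D

/-- The hypermatrix afforded by `D ⊆ I`: entry `0` at indices in `D`, entry `1` elsewhere. -/
def afforded {s : ℕ} (r : Fin s → ℕ) (D : Set (Idx r)) : Idx r → F :=
  fun i => if i ∈ D then 0 else 1

/-- `M` is a `q^t`-orbits hypermatrix, i.e. the hypermatrix afforded by some union
of `q^t`-orbits. -/
def IsOrbitMx {s : ℕ} (r : Fin s → ℕ) (q t : ℕ) (M : Idx r → F) : Prop :=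
  ∃ D : Set (Idx r), OrbitUnion r q t D ∧ M = afforded r D

/-- The minimum apparent distance `mad(M) = min {d*(P) : P a q^t-orbits hypermatrix,
`0 ≠ P ≤ M`}`, where `P ≤ M` means `supp P ⊆ supp M`. -/
def mad {s : ℕ} (r : Fin s → ℕ) (q t : ℕ) (M : Idx r → F) : ℕ :=
  sInf {d | ∃ P : Idx r → F, IsOrbitMx r q t P ∧ P ≠ 0 ∧ hsupp P ⊆ hsupp M ∧ apd r P = d}

/-- The `q^t`-cyclotomic coset of `b` modulo `r`. -/
def cycCoset (r q t : ℕ) (b : ZMod r) : Set (ZMod r) :=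
  {x | ∃ n : ℕ, x = (q : ZMod r) ^ (t * n) * b}

section Hypercolumns

variable {s : ℕ} {r : Fin (s + 1) → ℕ} {M P : Idx r → F} {k : Fin (s + 1)}

theorem hypercol_eq_zero_of_hsupp_subset (hPM : hsupp P ⊆ hsupp M) {b : ZMod (r k)}
    (hb : hypercol M k b = 0) : hypercol P k b = 0 := by
  funext i
  by_contra hi
  exact hPM hi (congrFun hb i)

theorem exists_hypercol_ne_zero (hP : P ≠ 0) (k : Fin (s + 1)) : ∃ b, hypercol P k b ≠ 0 := by
  obtain ⟨i, hi⟩ := Function.ne_iff.mp hP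
  refine ⟨i k, fun h => hi ?_⟩
  simpa [hypercol] using congrFun h (k.removeNth i)

theorem exists_hypercol_sub_natCast_ne_zero_forall_lt [NeZero (r k)] (hP : P ≠ 0)
    (b : ZMod (r k)) :
    ∃ j : ℕ, hypercol P k (b - j) ≠ 0 ∧ ∀ m < j, hypercol P k (b - m) = 0 := by
  have hex : ∃ j : ℕ, hypercol P k (b - j) ≠ 0 := by
    obtain ⟨c, hc⟩ := exists_hypercol_ne_zero hP k
    exact ⟨(b - c).val, by rwa [ZMod.natCast_zmod_val, sub_sub_cancel]⟩
  exact ⟨Nat.find hex, Nat.find_spec hex, fun m hm => not_not.mp (Nat.find_min hex hm)⟩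

theorem runLen_le_runLen_sub_natCast (hPM : hsupp P ⊆ hsupp M) {b : ZMod (r k)} {j : ℕ}
    (hj : ∀ m < j, hypercol P k (b - m) = 0) : runLen M k b ≤ runLen P k (b - j) := by
  refine Finset.card_le_card fun n => ?_
  simp only [Finset.mem_filter]
  refine And.imp_right fun hn m hm => ?_
  rw [Finset.mem_Icc] at hm
  obtain hmj | hjm := le_or_gt m j
  · have h := hj (j - m) (by omega)
    rwa [Nat.cast_sub hmj, ← sub_add] at h
  · have h := hypercol_eq_zero_of_hsupp_subset hPM
      (hn (m - j) (Finset.mem_Icc.mpr ⟨by omega, by omega⟩))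
    rwa [Nat.cast_sub hjm.le, add_sub_left_comm, add_comm] at h

theorem exists_hypercol_ne_zero_runLen_le [NeZero (r k)] (hP : P ≠ 0) (hPM : hsupp P ⊆ hsupp M)
    (b : ZMod (r k)) : ∃ c, hypercol P k c ≠ 0 ∧ runLen M k b ≤ runLen P k c := by
  obtain ⟨j, hne, hlt⟩ := exists_hypercol_sub_natCast_ne_zero_forall_lt hP b
  exact ⟨b - j, hne, runLen_le_runLen_sub_natCast hPM hlt⟩

theorem apd_le_iff [∀ k, NeZero (r k)] {n : ℕ} :
    apd r M ≤ n ↔ ∀ k b,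
      (runLen M k b + 1) * apd (fun j => r (k.succAbove j)) (hypercol M k b) ≤ n := by
  simp only [apd, Finset.sup_le_iff, Finset.mem_univ, true_imp_iff]
  refine forall_congr' fun k => ⟨fun h b => ?_, fun h b => h b⟩
  simpa only [ZMod.natCast_zmod_val] using h ⟨b.val, b.val_lt⟩

end Hypercolumns

theorem apd_fin_zero {r : Fin 0 → ℕ} (M : Idx r → F) : apd r M = if M = 0 then 0 else 1 := by
  have hM : M finZeroElim = 0 ↔ M = 0 := by
    simp only [funext_iff, Pi.zero_apply, Unique.forall_iff, Subsingleton.elim default finZeroElim]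
  simp only [apd, hM]

theorem apd_le_apd_of_fin_zero {r : Fin 0 → ℕ} {M P : Idx r → F} (hP : P ≠ 0) :
    apd r M ≤ apd r P := by
  rw [apd_fin_zero, apd_fin_zero, if_neg hP]
  split_ifs <;> simp

section Vectors

variable {r : Fin 1 → ℕ} [∀ k, NeZero (r k)] {M P : Idx r → F}

theorem apd_le_apd_of_hsupp_subset (hP : P ≠ 0) (hPM : hsupp P ⊆ hsupp M) :
    apd r M ≤ apd r P := by
  refine apd_le_iff.mpr fun k b => ?_
  obtain ⟨c, hc, hbc⟩ := exists_hypercol_ne_zero_runLen_le hP hPM b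
  calc (runLen M k b + 1) * apd (fun j => r (k.succAbove j)) (hypercol M k b)
      ≤ (runLen P k c + 1) * apd (fun j => r (k.succAbove j)) (hypercol P k c) :=
        Nat.mul_le_mul (Nat.succ_le_succ hbc) (apd_le_apd_of_fin_zero hc)
    _ ≤ apd r P := apd_le_iff.mp le_rfl k c

theorem mad_eq_apd_of_vector_general (q t : ℕ) (hM : IsOrbitMx r q t M) (hM0 : M ≠ 0) :
    mad r q t M = apd r M ∧
      ∀ P : Idx r → F, hsupp P ⊆ hsupp M → apd r P < apd r M → P = 0 := by
  refine ⟨IsLeast.csInf_eq ⟨⟨M, hM, hM0, subset_rfl, rfl⟩, ?_⟩, fun P hPM hlt => ?_⟩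
  · rintro _ ⟨P, -, hP, hPM, rfl⟩
    exact apd_le_apd_of_hsupp_subset hP hPM
  · by_contra hP
    exact hlt.not_ge (apd_le_apd_of_hsupp_subset hP hPM)

end Vectors

/-- For `s = 1`: a nonzero `q^t`-orbits vector `M` satisfies
`mad(M) = d*(M)`; equivalently, any `q^t`-orbits vector `P < M` with
`d*(P) < d*(M)` is zero. -/
theorem mad_eq_apd_of_vector
    (r₀ : ℕ)
    (p q t : ℕ) (hp : p.Prime) (hq : ∃ m : ℕ, 0 < m ∧ q = p ^ m) (ht : 0 < t)
    (hr : 0 < r₀) (hpr : ¬ p ∣ r₀)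
    {F : Type*} [Field F]
    (M : Idx (fun _ : Fin 1 => r₀) → F)
    (hM : IsOrbitMx (fun _ => r₀) q t M) (hM0 : M ≠ 0) :
    mad (fun _ => r₀) q t M = apd (fun _ => r₀) M ∧
    ∀ P : Idx (fun _ : Fin 1 => r₀) → F, IsOrbitMx (fun _ => r₀) q t P →
      hsupp P ⊂ hsupp M → apd (fun _ => r₀) P < apd (fun _ => r₀) M → P = 0 := by
  have : NeZero r₀ := ⟨hr.ne'⟩
  exact (mad_eq_apd_of_vector_general q t hM hM0).imp_right fun h P _ hPM => h P hPM.subset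

end AbelianCodes
end
end

section
/- Let B_q(α,γ,δ,b) be a multivariate BCH code with δ = {δ_k ≥ 2 : k ∈ γ} and b = {b_k ≥ 0 : k ∈ γ}. Then dim_{F_q} B_q(α,γ,δ,b) ≥ ∏_{j=1}^s r_j − m·(Σ_{k∈γ} (δ_k−1)·∏_{j≠k} r_j), where m = lcm{O_{r_k}(q) : k = 1,…,s} and O_r(q) denotes the multiplicative order of q modulo r. -/
open Classical

noncomputable section

namespace AbelianCodes

variable {F : Type*} [Field F]

variable {F : Type*} [Field F] {L : Type*} [Field L] [Algebra F L]

/-- An abelian code: a subspace of the group algebra `F[∏ Z_{r k}]` (identified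
with the space of coefficient functions `I → F`) which is closed under all
translations, i.e. an ideal. -/
def IsAbelianCode {s : ℕ} {r : Fin s → ℕ} (C : Submodule F (Idx r → F)) : Prop :=
  ∀ f ∈ C, ∀ a : Idx r, (fun i => f (i - a)) ∈ C

/-- Convolution: the multiplication of the group algebra in the coefficient
function picture. -/
def conv {s : ℕ} {r : Fin s → ℕ} [∀ k, NeZero (r k)] (f g : Idx r → F) : Idx r → F :=
  fun i => ∑ u : Idx r, f u * g (i - u)

/-- The (discrete) Fourier transform `φ_{α,f}(j) = f(α^j)` of a coefficient
function `f : I → F` with respect to `α`, with values in the extension `L`. -/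
def fourier {s : ℕ} {r : Fin s → ℕ} [∀ k, NeZero (r k)] (α : Fin s → L) (f : Idx r → F) :
    Idx r → L :=
  fun j => ∑ i : Idx r, algebraMap F L (f i) * ∏ k, α k ^ ((i k).val * (j k).val)

/-- The Hamming weight of a codeword. -/
def wt {s : ℕ} {r : Fin s → ℕ} [∀ k, NeZero (r k)] (f : Idx r → F) : ℕ :=
  (Finset.univ.filter fun i : Idx r => f i ≠ 0).card

/-- The minimum distance of a code. -/
def dmin {s : ℕ} {r : Fin s → ℕ} [∀ k, NeZero (r k)] (C : Submodule F (Idx r → F)) : ℕ :=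
  sInf {w | ∃ f ∈ C, f ≠ (0 : Idx r → F) ∧ wt f = w}

/-- The defining set `D_α(C) = {a ∈ I : f(α^a) = 0 for all f ∈ C}`. -/
def defSet {s : ℕ} (r : Fin s → ℕ) [∀ k, NeZero (r k)] (α : Fin s → L)
    (C : Submodule F (Idx r → F)) : Set (Idx r) :=
  {a | ∀ f ∈ C, fourier α f a = 0}

/-- The apparent distance of a code `C` with respect to `α`:
`d_α*(C) = min {d*(M(φ_{α,e})) : 0 ≠ e = e² ∈ C}`. -/
def dStarAlpha {s : ℕ} (r : Fin s → ℕ) [∀ k, NeZero (r k)] (α : Fin s → L)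
    (C : Submodule F (Idx r → F)) : ℕ :=
  sInf {d | ∃ e, e ∈ C ∧ e ≠ (0 : Idx r → F) ∧ conv e e = e ∧ apd r (fourier α e) = d}

/-- The apparent distance of a code: `d*(C) = max {d_β*(C) : β ∈ U}`, where `U`
is the set of tuples of primitive roots of unity in `L`. -/
def dStarCode {s : ℕ} (r : Fin s → ℕ) [∀ k, NeZero (r k)] (L : Type*) [Field L] [Algebra F L]
    (C : Submodule F (Idx r → F)) : ℕ :=
  sSup {d | ∃ α : Fin s → L, (∀ k, IsPrimitiveRoot (α k) (r k)) ∧ dStarAlpha r α C = d}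

/-- The defining set of the multivariate BCH code `B_q(α,γ,δ,b)`:
`∪_{k∈γ} ∪_{l=0}^{δ_k−2} ∪_{i ∈ I(k, b_k+l)} Q(i)`. -/
def bchDefSet {s : ℕ} (r : Fin s → ℕ) (q : ℕ) (γ : Finset (Fin s)) (δ b : Fin s → ℕ) :
    Set (Idx r) :=
  ⋃ k ∈ γ, ⋃ l ∈ Finset.range (δ k - 1),
    ⋃ i ∈ {i : Idx r | i k = ((b k + l : ℕ) : ZMod (r k))}, qOrbit r q 1 i


/-! The characters of `∏ k, ZMod (r k)` with values in `L` are `χ_a : i ↦ α^(a i)`, and the Fourier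
transform of `f` at `a` is the pairing of `f` with `χ_a`. Convolving `f` with `χ_a⁻¹` multiplies
`χ_a⁻¹` by this value, so the `L`-span of an ideal `C` contains `χ_a⁻¹` for every `a` outside the
defining set. Distinct characters being linearly independent, `dim C ≥ |I| - |D_α(C)|`.

The defining set of a BCH code is covered by the `q`-orbits of the elements of `∑ k, (δ k - 1)`
slices `{i | i k = c}`, of `∏ j ≠ k, r j` elements each. A `q`-orbit has at most as many elements
as the order of `q` in the ring `∏ k, ZMod (r k)`, which is `m`. -/

section Characters

lemma isPrimitive_prod_compAddMonoidHom_eval {ι : Type*} [Fintype ι] {R : ι → Type*}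
    [∀ i, CommRing (R i)] {M : Type*} [CommMonoid M] {ψ : ∀ i, AddChar (R i) M}
    (hψ : ∀ i, (ψ i).IsPrimitive) :
    (∏ i, (ψ i).compAddMonoidHom (Pi.evalAddMonoidHom R i)).IsPrimitive := by
  intro a ha
  obtain ⟨k, hk⟩ := Function.ne_iff.1 ha
  obtain ⟨x, hx⟩ := AddChar.ne_one_iff.1 (hψ k hk)
  refine AddChar.ne_one_iff.2 ⟨Pi.single k x, ?_⟩
  rwa [AddChar.mulShift_apply, AddChar.prod_apply,
    Finset.prod_eq_single k (fun j _ hj => by simp [hj]) (by simp),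
    AddChar.compAddMonoidHom_apply, Pi.evalAddMonoidHom_apply, Pi.mul_apply, Pi.single_eq_same]

lemma linearIndependent_addChar (G R : Type*) [AddMonoid G] [CommRing R] [IsDomain R] :
    LinearIndependent R ((⇑) : AddChar G R → G → R) :=
  (linearIndependent_monoidHom (Multiplicative G) R).comp _ AddChar.toMonoidHomEquiv.injective

lemma sum_inv_addChar_mul_translate {G R : Type*} [AddCommGroup G] [Fintype G] [CommSemiring R]
    (χ : AddChar G R) (f : G → R) (i : G) :
    ∑ u, χ⁻¹ u * f (i - u) = (∑ v, f v * χ v) * χ⁻¹ i := by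
  rw [Finset.sum_mul, ← Equiv.sum_comp (Equiv.subLeft i)]
  refine Finset.sum_congr rfl fun v _ => ?_
  rw [Equiv.subLeft_apply, sub_sub_cancel, sub_eq_neg_add, AddChar.map_add_eq_mul,
    AddChar.inv_apply, neg_neg]
  ring

variable {s : ℕ} {r : Fin s → ℕ} [∀ k, NeZero (r k)]

/-- The additive character `i ↦ α^i = ∏ k, α k ^ i k` of the ring `∏ k, ZMod (r k)` attached to a
tuple `α` of roots of unity. Its multiplicative shift by `a` is the character `i ↦ α^(a i)`, the
kernel of the Fourier transform at `a`, so all these characters come from a single primitive one. -/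
def rootChar {M : Type*} [CommMonoid M] {α : Fin s → M} (hα : ∀ k, α k ^ r k = 1) :
    AddChar (Idx r) M :=
  ∏ k, (AddChar.zmodChar (r k) (hα k)).compAddMonoidHom (Pi.evalAddMonoidHom _ k)

lemma mulShift_rootChar_apply {M : Type*} [CommMonoid M] {α : Fin s → M}
    (hα : ∀ k, α k ^ r k = 1) (a i : Idx r) :
    (rootChar hα).mulShift a i = ∏ k, α k ^ ((i k).val * (a k).val) := by
  rw [AddChar.mulShift_apply, rootChar, AddChar.prod_apply]
  refine Finset.prod_congr rfl fun k _ => ?_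
  rw [← AddChar.zmodChar_apply' (hα k)]
  simp [mul_comm]

lemma isPrimitive_rootChar {M : Type*} [CommMonoid M] {α : Fin s → M}
    (hα : ∀ k, IsPrimitiveRoot (α k) (r k)) :
    (rootChar fun k => (hα k).pow_eq_one).IsPrimitive :=
  isPrimitive_prod_compAddMonoidHom_eval fun k =>
    AddChar.zmodChar_primitive_of_primitive_root (r k) (hα k)

lemma fourier_eq_sum_mulShift_rootChar {α : Fin s → L} (hα : ∀ k, α k ^ r k = 1)
    (f : Idx r → F) (a : Idx r) :
    fourier α f a = ∑ i, algebraMap F L (f i) * (rootChar hα).mulShift a i := by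
  simp only [fourier, mulShift_rootChar_apply]

end Characters

section ScalarExtension

lemma finrank_span_range_le {R A M N : Type*} [CommRing R] [CommRing A] [Nontrivial A]
    [Algebra R A] [AddCommGroup M] [Module R M] [Module.Free R M] [Module.Finite R M]
    [AddCommGroup N] [Module R N] [Module A N] [IsScalarTower R A N] (f : M →ₗ[R] N) :
    Module.finrank A (Submodule.span A (LinearMap.range f : Set N)) ≤ Module.finrank R M := by
  have : Nontrivial R := (algebraMap R A).domain_nontrivial
  calc Module.finrank A (Submodule.span A (LinearMap.range f : Set N))
    _ = Module.finrank A (LinearMap.range (f.liftBaseChange A)) := by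
        rw [LinearMap.range_liftBaseChange]
    _ ≤ Module.finrank A (TensorProduct R A M) := LinearMap.finrank_range_le _
    _ = Module.finrank R M := Module.finrank_baseChange

/-- The extension of scalars of a code `C` from `F` to `L`, realised as the `L`-span of its
codewords inside `ι → L`. The characters with values in `L` are compared with `C` there. -/
def scalarExtension (L : Type*) [Field L] [Algebra F L] {ι : Type*} (C : Submodule F (ι → F)) :
    Submodule L (ι → L) :=
  Submodule.span L (LinearMap.range ((Algebra.linearMap F L).compLeft ι ∘ₗ C.subtype))

lemma algebraMap_comp_mem_scalarExtension {ι : Type*} {C : Submodule F (ι → F)} {f : ι → F}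
    (hf : f ∈ C) : (algebraMap F L ∘ f) ∈ scalarExtension L C :=
  Submodule.subset_span ⟨⟨f, hf⟩, rfl⟩

lemma finrank_scalarExtension_le {ι : Type*} [Finite ι] (C : Submodule F (ι → F)) :
    Module.finrank L (scalarExtension L C) ≤ Module.finrank F C :=
  finrank_span_range_le _

end ScalarExtension

section Dimension

variable {s : ℕ} {r : Fin s → ℕ} [∀ k, NeZero (r k)]

lemma inv_mulShift_rootChar_mem_scalarExtension {α : Fin s → L} (hα : ∀ k, α k ^ r k = 1)
    {C : Submodule F (Idx r → F)} (hC : IsAbelianCode C) {a : Idx r} (ha : a ∉ defSet r α C) :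
    ⇑((rootChar hα).mulShift a)⁻¹ ∈ scalarExtension L C := by
  set χ := (rootChar hα).mulShift a
  obtain ⟨f, hf, hfa⟩ : ∃ f ∈ C, fourier α f a ≠ 0 := by
    simpa only [defSet, Set.mem_ofPred_eq, not_forall, exists_prop] using ha
  have conv_eq : ∑ u, χ⁻¹ u • (algebraMap F L ∘ fun i => f (i - u)) = fourier α f a • ⇑χ⁻¹ := by
    funext i
    rw [Finset.sum_apply, Pi.smul_apply, smul_eq_mul, fourier_eq_sum_mulShift_rootChar hα]
    exact sum_inv_addChar_mul_translate χ (algebraMap F L ∘ f) i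
  rw [← Submodule.smul_mem_iff _ hfa, ← conv_eq]
  exact Submodule.sum_mem _ fun u _ =>
    Submodule.smul_mem _ _ (algebraMap_comp_mem_scalarExtension (hC f hf u))

lemma ncard_compl_defSet_le_finrank {α : Fin s → L} (hα : ∀ k, IsPrimitiveRoot (α k) (r k))
    {C : Submodule F (Idx r → F)} (hC : IsAbelianCode C) :
    (defSet r α C)ᶜ.ncard ≤ Module.finrank F C := by
  let χ (a : ↥(defSet r α C)ᶜ) : AddChar (Idx r) L :=
    ((rootChar fun k => (hα k).pow_eq_one).mulShift a)⁻¹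
  have χ_injective : Function.Injective χ :=
    inv_injective.comp <| (AddChar.to_mulShift_inj_of_isPrimitive (isPrimitive_rootChar hα)).comp
      Subtype.val_injective
  have χ_mem (a) : ⇑(χ a) ∈ scalarExtension L C :=
    inv_mulShift_rootChar_mem_scalarExtension _ hC a.2
  have linearIndependent_χ :
      LinearIndependent L fun a => (⟨χ a, χ_mem a⟩ : scalarExtension L C) :=
    .of_comp (scalarExtension L C).subtype <|
      (linearIndependent_addChar (Idx r) L).comp χ χ_injective
  calc (defSet r α C)ᶜ.ncard = Fintype.card ↥(defSet r α C)ᶜ := (Set.fintypeCard_eq_ncard _).symm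
    _ ≤ Module.finrank L (scalarExtension L C) := linearIndependent_χ.fintype_card_le_finrank
    _ ≤ Module.finrank F C := finrank_scalarExtension_le C

end Dimension

section DefiningSet

lemma orderOf_pi {ι : Type*} [Fintype ι] {G : ι → Type*} [∀ i, Monoid (G i)] (x : ∀ i, G i) :
    orderOf x = Finset.univ.lcm fun i => orderOf (x i) :=
  Nat.dvd_antisymm
    (orderOf_dvd_of_pow_eq_one <| funext fun i =>
      orderOf_dvd_iff_pow_eq_one.1 (Finset.dvd_lcm (Finset.mem_univ i)))
    (Finset.lcm_dvd fun i _ =>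
      orderOf_dvd_of_pow_eq_one <| congrFun (pow_orderOf_eq_one x) i)

lemma ncard_setOf_apply_eq {ι : Type*} [Fintype ι] [DecidableEq ι] {X : ι → Type*}
    [∀ i, Fintype (X i)] (i : ι) (c : X i) :
    {f : ∀ j, X j | f i = c}.ncard = ∏ j ∈ Finset.univ.erase i, Fintype.card (X j) := by
  rw [Set.ncard_eq_toFinset_card', Set.toFinset_ofPred, ← Fintype.piFinset_univ,
    Fintype.card_filter_piFinset_eq_of_mem (fun _ => Finset.univ) i (Finset.mem_univ c)]
  simp only [Finset.card_univ]

lemma ncard_biUnion_le_ncard_mul {ι β : Type*} {S : Set ι} (hS : S.Finite) {t : ι → Set β} {n : ℕ}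
    (ht : ∀ i ∈ S, (t i).ncard ≤ n) : (⋃ i ∈ S, t i).ncard ≤ S.ncard * n := by
  lift S to Finset ι using hS
  rw [Set.ncard_coe_finset]
  exact (S.set_ncard_biUnion_le t).trans (S.sum_le_card_nsmul _ n ht)

variable {s : ℕ} {r : Fin s → ℕ} {q : ℕ}

lemma isUnit_natCast_idx (hq : ∀ k, q.Coprime (r k)) : IsUnit (q : Idx r) :=
  Pi.isUnit_iff.2 fun k => (ZMod.isUnit_iff_coprime q (r k)).2 (hq k)

lemma qOrbit_eq_image_powers (t : ℕ) (a : Idx r) :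
    qOrbit r q t a = (· * a) '' (Submonoid.powers ((q : Idx r) ^ t) : Set (Idx r)) := by
  ext i
  rw [Submonoid.coe_powers, ← Set.range_comp]
  simp [qOrbit, ← pow_mul, funext_iff, eq_comm]

lemma ncard_qOrbit_le {t : ℕ} (hq : IsOfFinOrder ((q : Idx r) ^ t)) (a : Idx r) :
    (qOrbit r q t a).ncard ≤ orderOf ((q : Idx r) ^ t) := by
  rw [qOrbit_eq_image_powers, hq.powers_eq_image_range_orderOf, ← Finset.coe_image,
    Set.ncard_coe_finset]
  exact Finset.card_image_le.trans (Finset.card_image_le.trans_eq (Finset.card_range _))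

lemma ncard_bchDefSet_le [∀ k, NeZero (r k)] (hq : ∀ k, q.Coprime (r k)) (γ : Finset (Fin s))
    (δ b : Fin s → ℕ) :
    (bchDefSet r q γ δ b).ncard ≤
      orderOf (q : Idx r) * ∑ k ∈ γ, (δ k - 1) * ∏ j ∈ Finset.univ.erase k, r j := by
  have hfin : IsOfFinOrder ((q : Idx r) ^ 1) := by
    rw [pow_one]
    exact isOfFinOrder_iff_isUnit.2 (isUnit_natCast_idx hq)
  have ncard_slice (k : Fin s) (c : ZMod (r k)) :
      {i : Idx r | i k = c}.ncard = ∏ j ∈ Finset.univ.erase k, r j := by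
    simp only [ncard_setOf_apply_eq, ZMod.card]
  have ncard_slice_orbits (k : Fin s) (c : ZMod (r k)) :
      (⋃ i ∈ {i : Idx r | i k = c}, qOrbit r q 1 i).ncard ≤
        (∏ j ∈ Finset.univ.erase k, r j) * orderOf (q : Idx r) := by
    rw [← ncard_slice k c, ← pow_one (q : Idx r)]
    exact ncard_biUnion_le_ncard_mul (Set.toFinite _) fun i _ => ncard_qOrbit_le hfin i
  rw [Finset.mul_sum]
  refine (γ.set_ncard_biUnion_le _).trans (Finset.sum_le_sum fun k _ => ?_)
  calc _ ≤ ∑ l ∈ Finset.range (δ k - 1),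
          (⋃ i ∈ {i : Idx r | i k = ((b k + l : ℕ) : ZMod (r k))}, qOrbit r q 1 i).ncard :=
        Finset.set_ncard_biUnion_le _ _
    _ ≤ (Finset.range (δ k - 1)).card •
          ((∏ j ∈ Finset.univ.erase k, r j) * orderOf (q : Idx r)) :=
        Finset.sum_le_card_nsmul _ _ _ fun l _ => ncard_slice_orbits k _
    _ = orderOf (q : Idx r) * ((δ k - 1) * ∏ j ∈ Finset.univ.erase k, r j) := by
        rw [Finset.card_range, smul_eq_mul]
        ring

end DefiningSet

theorem bch_code_dimension_lower_bound_general
    {s : ℕ} (r : Fin s → ℕ) [∀ k, NeZero (r k)]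
    {F : Type*} [Field F] {q : ℕ} (hcop : ∀ k, q.Coprime (r k))
    (L : Type*) [Field L] [Algebra F L]
    (α : Fin s → L) (hα : ∀ k, IsPrimitiveRoot (α k) (r k))
    (γ : Finset (Fin s)) (δ b : Fin s → ℕ)
    (B : Submodule F (Idx r → F)) (hB : IsAbelianCode B)
    (hBdef : defSet r α B ⊆ bchDefSet r q γ δ b) :
    (∏ j, r j) - (Finset.univ.lcm fun k => orderOf (q : ZMod (r k))) *
        (∑ k ∈ γ, (δ k - 1) * ∏ j ∈ Finset.univ.erase k, r j)
      ≤ Module.finrank F B := by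
  have orderOf_q : orderOf (q : Idx r) = Finset.univ.lcm fun k => orderOf (q : ZMod (r k)) :=
    orderOf_pi _
  have card_idx : Nat.card (Idx r) = ∏ j, r j := by
    simp only [Nat.card_pi, Nat.card_zmod]
  have ncard_defSet_le := (Set.ncard_le_ncard hBdef).trans (ncard_bchDefSet_le hcop γ δ b)
  rw [← orderOf_q, ← card_idx, ← Set.ncard_add_ncard_compl (defSet r α B), tsub_le_iff_left]
  exact add_le_add ncard_defSet_le (ncard_compl_defSet_le_finrank hα hB)

/-- A multivariate BCH code `B = B_q(α,γ,δ,b)` satisfies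
`dim_{F_q} B ≥ ∏_j r_j − m · Σ_{k∈γ} (δ_k−1) · ∏_{j≠k} r_j`, where
`m = lcm {O_{r_k}(q)}` is the least common multiple of the multiplicative orders
of `q` modulo the `r_k`. -/
theorem bch_code_dimension_lower_bound
    {s : ℕ} (r : Fin s → ℕ) [∀ k, NeZero (r k)]
    {F : Type*} [Field F] [Fintype F]
    (hcop : ∀ k, (Fintype.card F).Coprime (r k))
    (L : Type*) [Field L] [Algebra F L]
    (α : Fin s → L) (hα : ∀ k, IsPrimitiveRoot (α k) (r k))
    (γ : Finset (Fin s)) (δ b : Fin s → ℕ)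
    (hδ : ∀ k ∈ γ, 2 ≤ δ k ∧ δ k ≤ r k)
    (B : Submodule F (Idx r → F)) (hB : IsAbelianCode B)
    (hBdef : defSet r α B = bchDefSet r (Fintype.card F) γ δ b) :
    (∏ j, r j) -
        (Finset.univ.lcm fun k => orderOf ((Fintype.card F : ZMod (r k)))) *
          (∑ k ∈ γ, (δ k - 1) * ∏ j ∈ Finset.univ.erase k, r j)
      ≤ Module.finrank F B :=
  bch_code_dimension_lower_bound_general r hcop L α hα γ δ b B hB hBdef.subset

end AbelianCodes
end
end
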